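/- Underestimating the target class-conditional density of class j strictly underestimates the loss on class j: fix c > 0 (the source class-conditional density fs j of class j at the feature point) and positive values ζ k for k ≠ j; for t > 0 let ζ_t : Fin K → ℝ be given by ζ_t j = c / t and ζ_t k = ζ k for k ≠ j. Then the map t ↦ L ζ_t j is strictly increasing on (0, ∞); in particular, if 0 < t' < t then L ζ_{t'} j < L ζ_t j. -/

import Mathlib

/-!
If `S` denotes the mass `∑ k ≠ j, w k * ζ k` of the other classes, then the loss on class `j` is
`-log (w j * ζ j / (w j * ζ j + S)) = log (1 + S / (w j * ζ j))`. When `w j` and `S` are positive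
this is strictly decreasing in `ζ j > 0`, and `ζ j = c / t` is strictly decreasing in `t > 0`.
-/

open Finset Function Set

section Reweighting

variable {ι : Type*} [Fintype ι]

/-- The posterior of class `j` obtained by normalizing the weights `w` after reweighting them
by `ζ`; it is the quantity `Q ζ j` of the theorem, with the dependence on `w` made explicit. -/
noncomputable def reweightedPosterior (w ζ : ι → ℝ) (j : ι) : ℝ :=
  w j * ζ j / ∑ k, w k * ζ k

/-- The log-loss of the reweighted posterior on class `j`; it is the quantity `L ζ j` of the
theorem, with the dependence on `w` made explicit. -/
noncomputable def reweightedLoss (w ζ : ι → ℝ) (j : ι) : ℝ :=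
  -Real.log (reweightedPosterior w ζ j)

variable [DecidableEq ι] {w ζ : ι → ℝ} {j : ι}

theorem inv_reweightedPosterior (hj : w j * ζ j ≠ 0) :
    (reweightedPosterior w ζ j)⁻¹ = 1 + (∑ k ∈ univ.erase j, w k * ζ k) / (w j * ζ j) := by
  rw [reweightedPosterior, inv_div, ← add_sum_erase _ _ (mem_univ j), add_div, div_self hj]

theorem reweightedLoss_eq_log_one_add (hj : w j * ζ j ≠ 0) :
    reweightedLoss w ζ j = Real.log (1 + (∑ k ∈ univ.erase j, w k * ζ k) / (w j * ζ j)) := by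
  rw [reweightedLoss, ← Real.log_inv, inv_reweightedPosterior hj]

theorem reweightedLoss_update_self {x : ℝ} (hj : w j * x ≠ 0) :
    reweightedLoss w (update ζ j x) j =
      Real.log (1 + (∑ k ∈ univ.erase j, w k * ζ k) / (w j * x)) := by
  have hsum : ∑ k ∈ univ.erase j, w k * update ζ j x k = ∑ k ∈ univ.erase j, w k * ζ k :=
    sum_congr rfl fun k hk => by rw [update_of_ne (ne_of_mem_erase hk)]
  rw [reweightedLoss_eq_log_one_add (by rwa [update_self]), hsum, update_self]

theorem strictAntiOn_reweightedLoss_update (hw : 0 < w j)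
    (hS : 0 < ∑ k ∈ univ.erase j, w k * ζ k) :
    StrictAntiOn (fun x => reweightedLoss w (update ζ j x) j) (Ioi 0) := by
  intro x (hx : 0 < x) y (hy : 0 < y) hxy
  have hwx : 0 < w j * x := mul_pos hw hx
  have hwy : 0 < w j * y := mul_pos hw hy
  simp only [reweightedLoss_update_self hwx.ne', reweightedLoss_update_self hwy.ne']
  apply Real.log_lt_log (by positivity)
  gcongr

theorem loss_strictMono_in_underestimated_density_general (hw : 0 < w j)
    (hS : 0 < ∑ k ∈ univ.erase j, w k * ζ k) {c : ℝ} (hc : 0 < c) :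
    StrictMonoOn (fun t => reweightedLoss w (update ζ j (c / t)) j) (Ioi 0) := by
  have hdiv : StrictAntiOn (fun t : ℝ => c / t) (Ioi 0) :=
    fun _ hs _ _ hst => div_lt_div_of_pos_left hc hs hst
  exact (strictAntiOn_reweightedLoss_update hw hS).comp hdiv fun _ ht => div_pos hc ht

end Reweighting

/-- Underestimating the target class-conditional density of class `j` strictly
underestimates the loss on class `j`: the map `t ↦ L (ζ_t) j`, where
`ζ_t j = c / t` and `ζ_t k = ζ k` for `k ≠ j`, is strictly increasing on `(0, ∞)`;
in particular, if `0 < t' < t` then `L ζ_{t'} j < L ζ_t j`. -/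
theorem loss_strictMono_in_underestimated_density
    (K : ℕ) (hK : 2 ≤ K) (j : Fin K)
    (w : Fin K → ℝ) (hw : ∀ k, 0 < w k)
    (Q L : (Fin K → ℝ) → Fin K → ℝ)
    (hQ : ∀ ζ i, Q ζ i = w i * ζ i / (∑ k, w k * ζ k))
    (hL : ∀ ζ i, L ζ i = -Real.log (Q ζ i))
    (c : ℝ) (hc : 0 < c)
    (ζ : Fin K → ℝ) (hζ : ∀ k, k ≠ j → 0 < ζ k)
    (ζt : ℝ → Fin K → ℝ)
    (hζtj : ∀ t, ζt t j = c / t)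
    (hζtk : ∀ t, ∀ k, k ≠ j → ζt t k = ζ k) :
    StrictMonoOn (fun t => L (ζt t) j) (Set.Ioi (0 : ℝ)) ∧
      ∀ t' t : ℝ, 0 < t' → t' < t → L (ζt t') j < L (ζt t) j := by
  have : Nontrivial (Fin K) := Fin.nontrivial_iff_two_le.2 hK
  have hS : 0 < ∑ k ∈ univ.erase j, w k * ζ k :=
    sum_pos (fun k hk => mul_pos (hw k) (hζ k (ne_of_mem_erase hk)))
      univ_nontrivial.erase_nonempty
  have hloss : ∀ t, L (ζt t) j = reweightedLoss w (update ζ j (c / t)) j := fun t => by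
    rw [hL, hQ, eq_update_iff.2 ⟨hζtj t, hζtk t⟩, reweightedLoss, reweightedPosterior]
  have hmono : StrictMonoOn (fun t => L (ζt t) j) (Ioi 0) := by
    simpa only [hloss] using loss_strictMono_in_underestimated_density_general (hw j) hS hc
  exact ⟨hmono, fun t' t ht' htt' => hmono ht' (ht'.trans htt') htt'⟩
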